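/- arXiv:1908.04714 — 2 statements merged into one kernel-verified Lean document; each statement's English description precedes it below -/
import Mathlib

section
/- For every q̄ ∈ (0,∞), the equation (λ + q̄)/λ = p̃(z)/z has a unique root φ*_{q̄} in the open interval (0,1); the map (0,∞) ∋ q̄ ↦ φ*_{q̄} is a continuous, strictly decreasing bijection from (0,∞) onto (0, φ*); and φ* = lim_{q̄↓0} φ*_{q̄}. -/
open MeasureTheory Filter Set

/-- The probability generating function of the offspring distribution `p`. -/
noncomputable def ptilde (p : ℕ → ℝ) (z : ℝ) : ℝ := ∑' k, p k * z ^ k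

/-- The p.g.f. of the immigration/culling mechanism: `rneg` is `r_{-1}`,
`r k` for `k ≥ 1` are the immigration probabilities (we require `r 0 = 0`). -/
noncomputable def rtilde (rneg : ℝ) (r : ℕ → ℝ) (z : ℝ) : ℝ :=
  rneg / z + ∑' k, r k * z ^ k

/-- `f : ℕ → ℝ` is `q`-harmonic for the branching process with branching mechanism `p`
(rate `lam`) and immigration/culling mechanism `(rneg, r)` (rate `mu`). -/
def IsQHarmonic (lam mu q : ℝ) (p : ℕ → ℝ) (rneg : ℝ) (r : ℕ → ℝ) (f : ℕ → ℝ) : Prop :=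
  ∀ x : ℕ, 1 ≤ x →
    (q + lam * x + mu) * f x
      = lam * x * (∑' k, p k * f (x + k - 1))
        + mu * (rneg * f (x - 1) + ∑' k, r k * f (x + k))

/-- The harmonic function `Φ_q`; `φ` is the smallest fixed point of `ptilde p` in `(0,1]`
and `θ` is the delimiter `θ_q`. -/
noncomputable def Phi (lam mu : ℝ) (p : ℕ → ℝ) (rneg : ℝ) (r : ℕ → ℝ)
    (φ θ q : ℝ) (x : ℕ) : ℝ :=
  q * ∫ v in (0:ℝ)..φ,
      Real.exp (-∫ w in θ..v,
          (q + mu * (1 - rtilde rneg r w)) / (lam * |ptilde p w - w|))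
        / (lam * |ptilde p v - v|) * v ^ x

/-- The harmonic function `Ψ_q`. -/
noncomputable def Psi (lam mu : ℝ) (p : ℕ → ℝ) (rneg : ℝ) (r : ℕ → ℝ)
    (φ q : ℝ) (x : ℕ) : ℝ :=
  1 - q * ∫ v in φ..(1:ℝ),
      Real.exp (-∫ w in v..(1:ℝ),
          (q + mu * (1 - rtilde rneg r w)) / (lam * |ptilde p w - w|))
        / (lam * |ptilde p v - v|) * v ^ x

/-- Condition (E'): `∫_v^1 dz/(z - ptilde p z) < ∞` for some `v ∈ (φ, 1)`. -/
def CondE (p : ℕ → ℝ) (φ : ℝ) : Prop :=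
  ∃ v, φ < v ∧ v < 1 ∧
    IntervalIntegrable (fun z => 1 / (z - ptilde p z)) MeasureTheory.volume v 1

/-!
Write `f = p̃`. A point `z > 0` solves `(λ + q) / λ = f z / z` exactly when
`q = λ (f z - z) / z`, so `q ↦ φ*_q` is the inverse of the map `z ↦ λ (f z - z) / z`.
The function `f z - z` is convex, positive on `(0, φ*)` and zero at `φ*`, hence strictly
decreasing on `(0, φ*]`; dividing by `z` keeps it so. The map is continuous, blows up at `0`
because `f 0 = p 0 > 0`, and vanishes at `φ*`, so it is a decreasing bijection from `(0, φ*)`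
onto `(0, ∞)`. To the right of `φ*` it is nonpositive, which rules out further roots.
-/

open scoped Topology

lemma strictAntiOn_of_rightInvOn {α β : Type*} [Preorder α] [LinearOrder β] {g : β → α}
    {f : α → β} {s : Set β} {t : Set α} (hg : AntitoneOn g s) (hmaps : MapsTo f t s)
    (hinv : RightInvOn f g t) : StrictAntiOn f t := fun x hx y hy hxy =>
  hg.reflect_lt (hmaps hx) (hmaps hy) (by rwa [hinv hx, hinv hy])

lemma continuousOn_of_antitoneOn_of_isOpen_image {α β : Type*} [LinearOrder α]
    [TopologicalSpace α] [OrderTopology α] [LinearOrder β] [TopologicalSpace β] [OrderTopology β]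
    [DenselyOrdered β] {f : α → β} {s : Set α}
    (hf : AntitoneOn f s) (hs : IsOpen s) (himage : IsOpen (f '' s)) : ContinuousOn f s :=
  fun _ hx => ContinuousAt.continuousWithinAt <|
    continuousAt_of_monotoneOn_of_image_mem_nhds (β := βᵒᵈ) hf.dual_right (hs.mem_nhds hx)
      (himage.mem_nhds (mem_image_of_mem f hx))

lemma convexOn_tsum {ι E : Type*} [AddCommMonoid E] [SMul ℝ E] {s : Set E} {f : ι → E → ℝ}
    (hs : Convex ℝ s) (hf : ∀ i, ConvexOn ℝ s (f i))
    (hsum : ∀ x ∈ s, Summable fun i => f i x) : ConvexOn ℝ s fun x => ∑' i, f i x := by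
  refine ⟨hs, fun x hx y hy a b ha hb hab => ?_⟩
  have hax : Summable fun i => a • f i x := (hsum x hx).const_smul a
  have hby : Summable fun i => b • f i y := (hsum y hy).const_smul b
  calc ∑' i, f i (a • x + b • y)
      ≤ ∑' i, (a • f i x + b • f i y) :=
        (hsum _ (hs hx hy ha hb hab)).tsum_le_tsum
          (fun i => (hf i).2 hx hy ha hb hab) (hax.add hby)
    _ = a • ∑' i, f i x + b • ∑' i, f i y := by
        rw [hax.tsum_add hby, tsum_const_smul'', tsum_const_smul'']

lemma norm_mul_pow_le_abs (a : ℝ) {z : ℝ} (hz : z ∈ Icc (-1 : ℝ) 1) (k : ℕ) :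
    ‖a * z ^ k‖ ≤ |a| := by
  rw [norm_mul, norm_pow]
  exact mul_le_of_le_one_right (abs_nonneg _) (pow_le_one₀ (norm_nonneg z) (abs_le.2 hz))

section GeneratingFunction

variable {p : ℕ → ℝ}

lemma ptilde_zero (p : ℕ → ℝ) : ptilde p 0 = p 0 := by
  rw [ptilde, tsum_eq_single 0 fun k hk => by simp [hk]]
  simp

lemma continuousOn_ptilde (hp : Summable p) : ContinuousOn (ptilde p) (Icc (-1) 1) :=
  continuousOn_tsum (fun _ => by fun_prop) hp.abs fun k _ hz => norm_mul_pow_le_abs (p k) hz k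

lemma convexOn_ptilde (hp : Summable p) (hnonneg : ∀ k, 0 ≤ p k) :
    ConvexOn ℝ (Icc 0 1) (ptilde p) :=
  convexOn_tsum (convex_Icc 0 1)
    (fun k => ((convexOn_pow k).smul (hnonneg k)).subset Icc_subset_Ici_self (convex_Icc 0 1))
    fun _ hz => hp.abs.of_norm_bounded fun k =>
      norm_mul_pow_le_abs (p k) (Icc_subset_Icc_left (by norm_num) hz) k

end GeneratingFunction

/-- The rate `q` for which `z ≠ 0` solves `(lam + q) / lam = f z / z`, as a function of `z`. The
paper's `q ↦ φ*_q` is its inverse when `f` is the offspring generating function. -/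
noncomputable def rootRate (lam : ℝ) (f : ℝ → ℝ) (z : ℝ) : ℝ := lam * ((f z - z) / z)

section RootRate

variable {lam φ z : ℝ} {f : ℝ → ℝ}

lemma add_div_eq_div_iff_rootRate_eq {q : ℝ} (hlam : lam ≠ 0) (hz : z ≠ 0) :
    (lam + q) / lam = f z / z ↔ rootRate lam f z = q := by
  rw [rootRate, div_eq_div_iff hlam hz, mul_div_assoc', div_eq_iff hz]
  constructor <;> intro h <;> linarith

lemma rootRate_eq_zero_of_fixed (hfix : f z = z) : rootRate lam f z = 0 := by
  simp [rootRate, hfix]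

lemma rootRate_pos_iff (hlam : 0 < lam) (hz : 0 < z) : 0 < rootRate lam f z ↔ z < f z := by
  rw [rootRate, mul_pos_iff_of_pos_left hlam, div_pos_iff_of_pos_right hz, sub_pos]

lemma continuousOn_rootRate {s : Set ℝ} (hf : ContinuousOn f s) (hs : ∀ z ∈ s, z ≠ 0) :
    ContinuousOn (rootRate lam f) s :=
  continuousOn_const.mul ((hf.sub continuousOn_id).div continuousOn_id hs)

lemma tendsto_rootRate_nhdsGT_zero (hlam : 0 < lam) (hf : ContinuousWithinAt f (Ioi 0) 0)
    (hf0 : 0 < f 0) : Tendsto (rootRate lam f) (𝓝[>] 0) atTop := by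
  have hsub : Tendsto (fun z => f z - z) (𝓝[>] 0) (𝓝 (f 0)) := by
    simpa using hf.tendsto.sub (continuousWithinAt_id (x := (0 : ℝ)) (s := Ioi 0)).tendsto
  exact (hsub.pos_mul_atTop hf0 tendsto_inv_nhdsGT_zero).const_mul_atTop hlam

lemma strictAntiOn_sub_self_of_convexOn (hconv : ConvexOn ℝ (Ioc 0 φ) f) (hfix : f φ = φ)
    (hlo : ∀ z, 0 < z → z < φ → z < f z) : StrictAntiOn (fun z => f z - z) (Ioc 0 φ) := by
  intro z hz w hw hzw
  have hzφ : z < φ := hzw.trans_le hw.2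
  rcases hw.2.eq_or_lt with rfl | hwφ
  · simpa [hfix] using hlo z hz.1 hzφ
  · have hsub : ConvexOn ℝ (Ioc 0 φ) fun z => f z - z := hconv.sub (concaveOn_id (convex_Ioc 0 φ))
    refine hsub.lt_left_of_right_lt hz (right_mem_Ioc.2 (hz.1.trans hzφ)) ?_ ?_
    · rw [openSegment_eq_Ioo hzφ]
      exact ⟨hzw, hwφ⟩
    · simpa [hfix] using hlo w hw.1 hwφ

lemma strictAntiOn_rootRate (hlam : 0 < lam) (hconv : ConvexOn ℝ (Ioc 0 φ) f) (hfix : f φ = φ)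
    (hlo : ∀ z, 0 < z → z < φ → z < f z) : StrictAntiOn (rootRate lam f) (Ioc 0 φ) := by
  intro z hz w hw hzw
  have hz_nonneg : 0 ≤ f z - z :=
    sub_nonneg.2 (hlo z hz.1 (hzw.trans_le hw.2)).le
  refine mul_lt_mul_of_pos_left ?_ hlam
  calc (f w - w) / w
      < (f z - z) / w :=
        div_lt_div_of_pos_right (strictAntiOn_sub_self_of_convexOn hconv hfix hlo hz hw hzw) hw.1
    _ ≤ (f z - z) / z := div_le_div_of_nonneg_left hz_nonneg hz.1 hzw.le

lemma bijOn_rootRate (hlam : 0 < lam) (hconv : ConvexOn ℝ (Icc 0 φ) f)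
    (hcont : ContinuousOn f (Icc 0 φ)) (hf0 : 0 < f 0) (hφ : 0 < φ) (hfix : f φ = φ)
    (hlo : ∀ z, 0 < z → z < φ → z < f z) : BijOn (rootRate lam f) (Ioo 0 φ) (Ioi 0) := by
  have hanti := strictAntiOn_rootRate hlam (hconv.subset Ioc_subset_Icc_self (convex_Ioc 0 φ))
    hfix hlo
  have hcontIoc : ContinuousOn (rootRate lam f) (Ioc 0 φ) :=
    continuousOn_rootRate (hcont.mono Ioc_subset_Icc_self) fun z hz => hz.1.ne'
  have hzero : Tendsto (rootRate lam f) (𝓝[>] 0) atTop :=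
    tendsto_rootRate_nhdsGT_zero hlam
      ((hcont 0 (left_mem_Icc.2 hφ.le)).mono_of_mem_nhdsWithin (Icc_mem_nhdsGT hφ)) hf0
  have hφ_lim : Tendsto (rootRate lam f) (𝓝[Ioo 0 φ] φ) (𝓝 0) := by
    simpa only [rootRate_eq_zero_of_fixed hfix] using
      ((hcontIoc φ (right_mem_Ioc.2 hφ)).mono Ioo_subset_Ioc_self).tendsto
  have : (𝓝[Ioo 0 φ] φ).NeBot := right_nhdsWithin_Ioo_neBot hφ
  have : (𝓝[Ioo 0 φ] (0 : ℝ)).NeBot := left_nhdsWithin_Ioo_neBot hφ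
  exact ⟨fun z hz => (rootRate_pos_iff hlam hz.1).2 (hlo z hz.1 hz.2),
    hanti.injOn.mono Ioo_subset_Ioc_self,
    isPreconnected_Ioo.intermediate_value_Ioi (l₁ := 𝓝[Ioo 0 φ] φ) (l₂ := 𝓝[Ioo 0 φ] 0)
      inf_le_right inf_le_right (hcontIoc.mono Ioo_subset_Ioc_self) hφ_lim
      (hzero.mono_left (nhdsWithin_mono 0 Ioo_subset_Ioi_self))⟩

lemma lt_of_rootRate_pos {b : ℝ} (hlam : 0 < lam) (hfix : f φ = φ)
    (hhi : ∀ z, φ < z → z < b → f z ≤ z) (hz : z ∈ Ioo 0 b) (hpos : 0 < rootRate lam f z) :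
    z < φ := by
  have hlt : z < f z := (rootRate_pos_iff hlam hz.1).1 hpos
  rcases lt_trichotomy z φ with hzφ | rfl | hφz
  · exact hzφ
  · exact absurd hfix hlt.ne'
  · exact absurd (hhi z hφz hz.2) hlt.not_ge

end RootRate

theorem stmt2_general (lam : ℝ) (f : ℝ → ℝ) (φ b : ℝ) (hlam : 0 < lam)
    (hconv : ConvexOn ℝ (Icc 0 φ) f) (hcont : ContinuousOn f (Icc 0 φ)) (hf0 : 0 < f 0)
    (hφ0 : 0 < φ) (hφb : φ ≤ b) (hfix : f φ = φ)
    (hlo : ∀ z, 0 < z → z < φ → z < f z) (hhi : ∀ z, φ < z → z < b → f z ≤ z) :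
    ∃ φq : ℝ → ℝ,
      (∀ q, 0 < q →
        (φq q ∈ Ioo 0 b ∧ (lam + q) / lam = f (φq q) / φq q) ∧
        (∀ z ∈ Ioo 0 b, (lam + q) / lam = f z / z → z = φq q)) ∧
      ContinuousOn φq (Ioi 0) ∧
      StrictAntiOn φq (Ioi 0) ∧
      BijOn φq (Ioi 0) (Ioo 0 φ) ∧
      Tendsto φq (𝓝[>] 0) (𝓝 φ) := by
  have hrate := bijOn_rootRate hlam hconv hcont hf0 hφ0 hfix hlo
  have hinv := hrate.invOn_invFunOn
  set φq := Function.invFunOn (rootRate lam f) (Ioo 0 φ)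
  have hbij : BijOn φq (Ioi 0) (Ioo 0 φ) := hrate.symm hinv.symm
  have hanti : StrictAntiOn φq (Ioi 0) :=
    strictAntiOn_of_rightInvOn
      ((strictAntiOn_rootRate hlam (hconv.subset Ioc_subset_Icc_self (convex_Ioc 0 φ))
        hfix hlo).antitoneOn.mono Ioo_subset_Ioc_self) hbij.mapsTo hinv.2
  refine ⟨φq, fun q hq => ⟨⟨?_, ?_⟩, fun z hz hroot => ?_⟩, ?_, hanti, hbij, ?_⟩
  · exact Ioo_subset_Ioo_right hφb (hbij.mapsTo hq)
  · exact (add_div_eq_div_iff_rootRate_eq hlam.ne' (hbij.mapsTo hq).1.ne').2 (hinv.2 hq)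
  · have hzq : rootRate lam f z = q := (add_div_eq_div_iff_rootRate_eq hlam.ne' hz.1.ne').1 hroot
    have hzφ : z < φ := lt_of_rootRate_pos hlam hfix hhi hz (hzq ▸ hq)
    rw [← hzq, hinv.1 ⟨hz.1, hzφ⟩]
  · exact continuousOn_of_antitoneOn_of_isOpen_image hanti.antitoneOn isOpen_Ioi
      (hbij.image_eq ▸ isOpen_Ioo)
  · have hlim := hanti.antitoneOn.tendsto_nhdsGT (hbij.image_eq ▸ bddAbove_Ioo)
    rwa [hbij.image_eq, csSup_Ioo hφ0] at hlim

/-- for every `q̄ ∈ (0,∞)` the equation `(λ + q̄)/λ = p̃(z)/z` has a unique root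
`φ*_{q̄} ∈ (0,1)`; the map `q̄ ↦ φ*_{q̄}` is a continuous strictly decreasing bijection from
`(0,∞)` onto `(0, φ*)`, and `φ* = lim_{q̄↓0} φ*_{q̄}`. -/
theorem stmt2 (lam : ℝ) (p : ℕ → ℝ) (φ : ℝ)
    (hlam : 0 < lam)
    (hp : ∀ k, 0 ≤ p k) (hpsum : ∑' k, p k = 1) (hp0 : 0 < p 0) (hp1 : p 1 = 0)
    (hφ0 : 0 < φ) (hφ1 : φ ≤ 1) (hφfix : ptilde p φ = φ)
    (hφlo : ∀ z : ℝ, 0 < z → z < φ → z < ptilde p z)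
    (hφhi : ∀ z : ℝ, φ < z → z < 1 → ptilde p z < z) :
    ∃ φq : ℝ → ℝ,
      (∀ qb : ℝ, 0 < qb →
        (φq qb ∈ Set.Ioo (0:ℝ) 1 ∧ (lam + qb) / lam = ptilde p (φq qb) / φq qb) ∧
        (∀ z ∈ Set.Ioo (0:ℝ) 1, (lam + qb) / lam = ptilde p z / z → z = φq qb)) ∧
      ContinuousOn φq (Set.Ioi 0) ∧
      StrictAntiOn φq (Set.Ioi 0) ∧
      Set.BijOn φq (Set.Ioi 0) (Set.Ioo 0 φ) ∧
      Filter.Tendsto φq (nhdsWithin 0 (Set.Ioi 0)) (nhds φ) := by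
  have hs : Summable p := by
    by_contra h
    simp [tsum_eq_zero_of_not_summable h] at hpsum
  exact stmt2_general lam (ptilde p) φ 1 hlam
    ((convexOn_ptilde hs hp).subset (Icc_subset_Icc_right hφ1) (convex_Icc 0 φ))
    ((continuousOn_ptilde hs).mono (Icc_subset_Icc (by norm_num) hφ1))
    (ptilde_zero p ▸ hp0) hφ0 hφ1 hφfix hφlo fun z hφz hz1 => (hφhi z hφz hz1).le
end

section
/- Suppose μ(r̃(φ*) − 1) > 0 and set q := μ(r̃(φ*) − 1). Then necessarily φ* < 1, and the function ℕ₀ ∋ x ↦ (φ*)^x is bounded, strictly positive, q-harmonic, and tends to 0 at infinity. -/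
open MeasureTheory Filter Set

/-!
Applied to `x ↦ z ^ x`, the branching part of the generator produces `z ^ (x - 1) * ptilde p z` and
the immigration/culling part produces `z ^ x * rtilde rneg r z`. At a fixed point `z` of `ptilde p`
the branching part therefore cancels against `lam * x * z ^ x`, so that `x ↦ z ^ x` is an
eigenfunction with eigenvalue `mu * (rtilde rneg r z - 1)`. As `rtilde rneg r 1` is the total mass
`1` of the immigration/culling mechanism, this eigenvalue vanishes at `z = 1`.
-/

theorem tsum_mul_pow_add {𝕜 : Type*} [Semifield 𝕜] [TopologicalSpace 𝕜]
    [IsTopologicalSemiring 𝕜] [T2Space 𝕜] (a : ℕ → 𝕜) (z : 𝕜) (m : ℕ) :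
    ∑' k, a k * z ^ (m + k) = z ^ m * ∑' k, a k * z ^ k := by
  rw [← tsum_mul_left]
  exact tsum_congr fun k => by ring

theorem tsum_mul_pow_add_sub_one (p : ℕ → ℝ) (z : ℝ) {x : ℕ} (hx : 1 ≤ x) :
    ∑' k, p k * z ^ (x + k - 1) = z ^ (x - 1) * ptilde p z := by
  simp only [Nat.sub_add_comm hx]
  exact tsum_mul_pow_add p z (x - 1)

theorem mul_pow_sub_one_add_tsum_mul_pow (rneg : ℝ) (r : ℕ → ℝ) {z : ℝ} (hz : z ≠ 0) {x : ℕ}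
    (hx : 1 ≤ x) :
    rneg * z ^ (x - 1) + ∑' k, r k * z ^ (x + k) = z ^ x * rtilde rneg r z := by
  rw [tsum_mul_pow_add, pow_sub₀ z hz hx, rtilde]
  ring

theorem rtilde_one (rneg : ℝ) (r : ℕ → ℝ) : rtilde rneg r 1 = rneg + ∑' k, r k := by
  simp [rtilde]

theorem isQHarmonic_pow_of_ptilde_eq_self (lam mu rneg : ℝ) {p : ℕ → ℝ} (r : ℕ → ℝ) {z : ℝ}
    (hz : z ≠ 0) (hfix : ptilde p z = z) :
    IsQHarmonic lam mu (mu * (rtilde rneg r z - 1)) p rneg r (fun x => z ^ x) := by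
  intro x hx
  have hbranching : ∑' k, p k * z ^ (x + k - 1) = z ^ x := by
    rw [tsum_mul_pow_add_sub_one p z hx, hfix, pow_sub_one_mul (Nat.one_le_iff_ne_zero.mp hx)]
  rw [hbranching, mul_pow_sub_one_add_tsum_mul_pow rneg r hz hx]
  ring

theorem stmt5_general (lam mu rneg : ℝ) (p r : ℕ → ℝ) (φ : ℝ)
    (hφ0 : 0 < φ) (hφ1 : φ ≤ 1) (hφfix : ptilde p φ = φ)
    (hrsum : rneg + ∑' k, r k = 1) (hrφ : rtilde rneg r φ ≠ 1) :
    φ < 1 ∧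
    (∃ C : ℝ, ∀ x : ℕ, |φ ^ x| ≤ C) ∧
    (∀ x : ℕ, 0 < φ ^ x) ∧
    IsQHarmonic lam mu (mu * (rtilde rneg r φ - 1)) p rneg r (fun x : ℕ => φ ^ x) ∧
    Tendsto (fun x : ℕ => φ ^ x) atTop (nhds 0) := by
  have hφ_ne_one : φ ≠ 1 := by
    rintro rfl
    exact hrφ ((rtilde_one rneg r).trans hrsum)
  have hφ_lt_one : φ < 1 := hφ1.lt_of_ne hφ_ne_one
  have hφ_pow_pos (x : ℕ) : 0 < φ ^ x := pow_pos hφ0 x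
  have hφ_pow_le_one (x : ℕ) : |φ ^ x| ≤ 1 :=
    (abs_of_pos (hφ_pow_pos x)).trans_le (pow_le_one₀ hφ0.le hφ1)
  exact ⟨hφ_lt_one, ⟨1, hφ_pow_le_one⟩, hφ_pow_pos,
    isQHarmonic_pow_of_ptilde_eq_self lam mu rneg r hφ0.ne' hφfix,
    tendsto_pow_atTop_nhds_zero_of_lt_one hφ0.le hφ_lt_one⟩

/-- if `μ(r̃(φ*) - 1) > 0` and `q := μ(r̃(φ*) - 1)`, then `φ* < 1` and
`x ↦ (φ*)^x` is bounded, strictly positive, `q`-harmonic and tends to `0` at infinity. -/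
theorem stmt5 (lam mu rneg : ℝ) (p r : ℕ → ℝ) (φ : ℝ)
    (hlam : 0 < lam)
    (hp : ∀ k, 0 ≤ p k) (hpsum : ∑' k, p k = 1) (hp0 : 0 < p 0) (hp1 : p 1 = 0)
    (hφ0 : 0 < φ) (hφ1 : φ ≤ 1) (hφfix : ptilde p φ = φ)
    (hφlo : ∀ z : ℝ, 0 < z → z < φ → z < ptilde p z)
    (hφhi : ∀ z : ℝ, φ < z → z < 1 → ptilde p z < z)
    (hmu : 0 ≤ mu) (hrneg : 0 ≤ rneg) (hr : ∀ k, 0 ≤ r k) (hr0 : r 0 = 0)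
    (hrsum : rneg + ∑' k, r k = 1)
    (hq : 0 < mu * (rtilde rneg r φ - 1)) :
    φ < 1 ∧
    (∃ C : ℝ, ∀ x : ℕ, |φ ^ x| ≤ C) ∧
    (∀ x : ℕ, 0 < φ ^ x) ∧
    IsQHarmonic lam mu (mu * (rtilde rneg r φ - 1)) p rneg r (fun x : ℕ => φ ^ x) ∧
    Filter.Tendsto (fun x : ℕ => φ ^ x) Filter.atTop (nhds 0) := by
  have hrφ : rtilde rneg r φ ≠ 1 := sub_ne_zero.mp (right_ne_zero_of_mul hq.ne')
  exact stmt5_general lam mu rneg p r φ hφ0 hφ1 hφfix hrsum hrφ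
end
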